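/- arXiv:2507.02015 — 7 statements merged into one kernel-verified Lean document; each statement's English description precedes it below -/
import Mathlib

section
/- Let G be a simple graph on n ≥ 3 vertices that is not complete and has at least one edge. If there is a Marcello step from G to the complete graph on its vertex set (i.e., ϖ(G) = 1), then (∑_{v : 0 < deg_G(v) < n−1} deg_G(v)) + |E(G)| ≥ n(n−1)/2. -/
open SimpleGraph

attribute [local instance] Classical.propDecidable

/-- The degree of a vertex. -/
noncomputable def mdeg {V : Type*} (G : SimpleGraph V) (v : V) : ℕ :=
  (G.neighborSet v).ncard

/-- `G'` is obtained from `G` by a Marcello step. -/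
def MarcelloStep {V : Type*} [Fintype V] (G G' : SimpleGraph V) : Prop :=
  G ≤ G' ∧ ∃ f : Sym2 V → V,
    (∀ e ∈ G'.edgeSet \ G.edgeSet, f e ∈ e) ∧
    (∀ v : V, (∃ e ∈ G'.edgeSet \ G.edgeSet, f e = v) →
        0 < mdeg G v ∧ mdeg G v < Fintype.card V - 1) ∧
    (∀ v : V, ((G'.edgeSet \ G.edgeSet) ∩ {e | f e = v}).ncard ≤ mdeg G v)

/-- There is a Marcello chain of length `k` from `G` to `H`. -/
def MarcelloChain {V : Type*} [Fintype V] (G H : SimpleGraph V) (k : ℕ) : Prop :=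
  ∃ c : ℕ → SimpleGraph V, c 0 = G ∧ c k = H ∧ ∀ i < k, MarcelloStep (c i) (c (i + 1))

/-- The Marcello number `ϖ(G)`. -/
noncomputable def marcelloNumber {V : Type*} [Fintype V] (G : SimpleGraph V) : ℕ :=
  sInf {k | MarcelloChain G (⊤ : SimpleGraph V) k}

/-- The sum of degrees over vertices `v` with `0 < deg v < n - 1`. -/
noncomputable def marcelloSum {V : Type*} [Fintype V] (G : SimpleGraph V) : ℕ :=
  ∑ v ∈ Finset.univ.filter
      (fun v => 0 < mdeg G v ∧ mdeg G v < Fintype.card V - 1), mdeg G v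

lemma ncard_le_sum_ncard_fiber {α β : Type*} {s : Set α} {t : Finset β} {f : α → β}
    (hf : Set.MapsTo f s t) :
    s.ncard ≤ ∑ b ∈ t, (s ∩ {a | f a = b}).ncard := by
  have fibers_cover : ⋃ b ∈ t, s ∩ {a | f a = b} = s := by
    ext a
    simpa using fun ha => hf ha
  calc s.ncard = (⋃ b ∈ t, s ∩ {a | f a = b}).ncard := by rw [fibers_cover]
    _ ≤ ∑ b ∈ t, (s ∩ {a | f a = b}).ncard := t.set_ncard_biUnion_le _

lemma ncard_edgeSet_top (V : Type*) [Fintype V] :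
    (⊤ : SimpleGraph V).edgeSet.ncard = Fintype.card V * (Fintype.card V - 1) / 2 := by
  rw [← coe_edgeFinset, Set.ncard_coe_finset, card_edgeFinset_top_eq_card_choose_two,
    Nat.choose_two_right]

section MarcelloStep

variable {V : Type*} [Fintype V] {G G' : SimpleGraph V}

lemma MarcelloStep.ncard_edgeSet_sdiff_le_marcelloSum (hstep : MarcelloStep G G') :
    (G'.edgeSet \ G.edgeSet).ncard ≤ marcelloSum G := by
  obtain ⟨-, initiator, -, initiator_degree, initiated_le⟩ := hstep
  have initiator_mapsTo : Set.MapsTo initiator (G'.edgeSet \ G.edgeSet)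
      (Finset.univ.filter fun v => 0 < mdeg G v ∧ mdeg G v < Fintype.card V - 1) :=
    fun e he => by simpa using initiator_degree (initiator e) ⟨e, he, rfl⟩
  exact (ncard_le_sum_ncard_fiber initiator_mapsTo).trans
    (Finset.sum_le_sum fun v _ => initiated_le v)

theorem marcello_step_degree_sum_bound_general (hstep : MarcelloStep G G') :
    G'.edgeSet.ncard ≤ marcelloSum G + G.edgeSet.ncard :=
  calc G'.edgeSet.ncard = (G'.edgeSet \ G.edgeSet).ncard + G.edgeSet.ncard :=
        (Set.ncard_sdiff_add_ncard_of_subset (edgeSet_mono hstep.1)).symm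
    _ ≤ marcelloSum G + G.edgeSet.ncard :=
        Nat.add_le_add_right hstep.ncard_edgeSet_sdiff_le_marcelloSum _

end MarcelloStep

/-- If `G` (non-complete, with an edge, on `n ≥ 3` vertices) can be completed by one
Marcello step, then `∑_{0 < deg v < n-1} deg v + |E(G)| ≥ n(n-1)/2`. -/
theorem marcello_step_degree_sum_bound {V : Type*} [Fintype V] (G : SimpleGraph V)
    (hn : 3 ≤ Fintype.card V) (hne : G ≠ ⊤) (hE : G.edgeSet.Nonempty)
    (hstep : MarcelloStep G (⊤ : SimpleGraph V)) :
    Fintype.card V * (Fintype.card V - 1) / 2 ≤ marcelloSum G + G.edgeSet.ncard := by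
  rw [← ncard_edgeSet_top V]
  exact marcello_step_degree_sum_bound_general hstep
end

section
/- Let H and G be simple graphs on the same finite vertex set V with E(H) ⊆ E(G) (H is a spanning subgraph of G). If there is a Marcello chain of length k from H to the complete graph on V, then there is a Marcello chain of length at most k from G to the complete graph on V; hence ϖ(G) ≤ ϖ(H). -/
open SimpleGraph

attribute [local instance] Classical.propDecidable

/-!
Join every graph of the given chain with `G`. The new edges of a joined step are among those of the
original step, so the same initiators serve: their degrees can only have grown, and a vertex
incident to a missing edge never has full degree.
-/

section Degree

variable {V : Type*} {G G' : SimpleGraph V} {v : V}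

theorem mdeg_eq_degree [Fintype (G.neighborSet v)] : mdeg G v = G.degree v := by
  rw [mdeg, Set.ncard_eq_toFinset_card', ← neighborFinset_def, card_neighborFinset_eq_degree]

theorem mdeg_mono [Finite (G'.neighborSet v)] (h : G ≤ G') : mdeg G v ≤ mdeg G' v :=
  Set.ncard_le_ncard (neighborSet_mono h v)

theorem mdeg_lt_card_sub_one_iff [Fintype V] :
    mdeg G v < Fintype.card V - 1 ↔ ¬G.IsUniversal v := by
  rw [mdeg_eq_degree, degree_lt_card_sub_one]

theorem not_isUniversal_of_mem_edgeSet_sdiff {e : Sym2 V} (he : e ∈ G'.edgeSet \ G.edgeSet)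
    (hv : v ∈ e) : ¬G.IsUniversal v := by
  obtain ⟨w, rfl⟩ := hv
  obtain ⟨hadj' : G'.Adj v w, hnadj : ¬G.Adj v w⟩ := he
  exact fun huniv => hnadj (huniv hadj'.ne)

end Degree

section Chain

variable {V : Type*} [Fintype V] {A A' B B' : SimpleGraph V}

theorem MarcelloStep.mono (h : MarcelloStep A B) (hA : A ≤ A') (hle : A' ≤ B')
    (hB : B' ≤ B ⊔ A') : MarcelloStep A' B' := by
  obtain ⟨-, f, hf_mem, hf_deg, hf_card⟩ := h
  have new_edges_subset : B'.edgeSet \ A'.edgeSet ⊆ B.edgeSet \ A.edgeSet := by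
    rw [← edgeSet_sdiff, ← edgeSet_sdiff, edgeSet_subset_edgeSet]
    calc B' \ A' ≤ (B ⊔ A') \ A' := sdiff_le_sdiff_right hB
      _ = B \ A' := sup_sdiff_right_self
      _ ≤ B \ A := sdiff_le_sdiff_left hA
  refine ⟨hle, f, fun e he => hf_mem e (new_edges_subset he), ?_, fun v => ?_⟩
  · rintro _ ⟨e, he, rfl⟩
    have he_old := new_edges_subset he
    exact ⟨(hf_deg _ ⟨e, he_old, rfl⟩).1.trans_le (mdeg_mono hA),
      mdeg_lt_card_sub_one_iff.mpr (not_isUniversal_of_mem_edgeSet_sdiff he (hf_mem e he_old))⟩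
  · calc ((B'.edgeSet \ A'.edgeSet) ∩ {e | f e = v}).ncard
        ≤ ((B.edgeSet \ A.edgeSet) ∩ {e | f e = v}).ncard :=
          Set.ncard_le_ncard (Set.inter_subset_inter_left _ new_edges_subset)
      _ ≤ mdeg A v := hf_card v
      _ ≤ mdeg A' v := mdeg_mono hA

theorem MarcelloStep.sup_right (h : MarcelloStep A B) (G : SimpleGraph V) :
    MarcelloStep (A ⊔ G) (B ⊔ G) :=
  h.mono le_sup_left (sup_le_sup_right h.1 G) (sup_le_sup_left le_sup_right B)

theorem MarcelloChain.sup_right {k : ℕ} (h : MarcelloChain A B k) (G : SimpleGraph V) :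
    MarcelloChain (A ⊔ G) (B ⊔ G) k := by
  obtain ⟨c, rfl, rfl, hstep⟩ := h
  exact ⟨fun i => c i ⊔ G, rfl, rfl, fun i hi => (hstep i hi).sup_right G⟩

end Chain

/-- If `H` is a spanning subgraph of `G` and `H` has a Marcello chain of length `k`
to the complete graph, then `G` has one of length at most `k`. -/
theorem marcello_chain_of_spanning_subgraph {V : Type*} [Fintype V]
    (H G : SimpleGraph V) (hHG : H ≤ G) (k : ℕ)
    (hchain : MarcelloChain H (⊤ : SimpleGraph V) k) :
    ∃ k' ≤ k, MarcelloChain G (⊤ : SimpleGraph V) k' := by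
  have hsup : MarcelloChain (H ⊔ G) (⊤ ⊔ G) k := hchain.sup_right G
  rw [sup_eq_right.mpr hHG, top_sup_eq] at hsup
  exact ⟨k, le_rfl, hsup⟩
end

section
/- Let G be a simple graph on n ≥ 2 vertices with at least one edge and let H be a simple graph on m ≥ 1 vertices. If there is a Marcello chain of length a from G to the complete graph on its vertex set and a Marcello chain of length b from H to the complete graph on its vertex set, then there is a Marcello chain of length at most max(a, b) + 1 from the disjoint union G ⊔ H to the complete graph on its n + m vertices; hence ϖ(G ∪ H) ≤ max{ϖ(G) + 1, ϖ(H) + 1}. -/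
open SimpleGraph

attribute [local instance] Classical.propDecidable

/-!
Run the two chains side by side, padding the shorter one with trivial steps, until both parts are
complete. The `n * m` edges between the parts are then added in a single step, in which every
vertex of the first part may initiate `n - 1` edges and every vertex of the second `m - 1`. If
`n ≠ m`, the vertices of the larger part initiate all of them; if `n = m`, each vertex of the first
part initiates all but one of its edges, the remaining edges being a perfect matching initiated
from the second part.
-/

section Degree

variable {α β : Type*}

theorem mdeg_sum_inl (G : SimpleGraph α) (H : SimpleGraph β) (v : α) :
    mdeg (G ⊕g H) (.inl v) = mdeg G v := by
  rw [mdeg, neighborSet_sum_inl, Set.ncard_image_of_injective _ Sum.inl_injective, mdeg]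

theorem mdeg_sum_inr (G : SimpleGraph α) (H : SimpleGraph β) (w : β) :
    mdeg (G ⊕g H) (.inr w) = mdeg H w := by
  rw [mdeg, neighborSet_sum_inr, Set.ncard_image_of_injective _ Sum.inr_injective, mdeg]

theorem mdeg_top [Fintype α] (v : α) : mdeg (⊤ : SimpleGraph α) v = Fintype.card α - 1 := by
  rw [mdeg, neighborSet_top, Set.ncard_compl, Set.ncard_singleton, Nat.card_eq_fintype_card]

end Degree

/-- A choice of initiators for a Marcello step from `G` to `G'`: `R v w` says that `v` is allowed to
initiate the edge `vw`. A relation on vertices, unlike a function on `Sym2 V`, glues along disjoint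
unions. It may also hold of pairs that are not new edges, and in both directions along an edge, but
every related pair counts towards the bounds. -/
structure IsInitiation {V : Type*} [Fintype V] (G G' : SimpleGraph V) (R : V → V → Prop) :
    Prop where
  rel_or_rel : ∀ ⦃v w⦄, G'.Adj v w → ¬ G.Adj v w → R v w ∨ R w v
  mdeg_lt : ∀ ⦃v w⦄, R v w → mdeg G v < Fintype.card V - 1
  ncard_le : ∀ v, {w | R v w}.ncard ≤ mdeg G v

section Step

variable {V : Type*} [Fintype V] {G G' : SimpleGraph V}

theorem MarcelloStep.exists_isInitiation (h : MarcelloStep G G') : ∃ R, IsInitiation G G' R := by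
  obtain ⟨-, f, f_mem, f_deg, f_card⟩ := h
  refine ⟨fun v w => s(v, w) ∈ G'.edgeSet \ G.edgeSet ∧ f s(v, w) = v, ?_, ?_, fun v => ?_⟩
  · intro v w hadj hnadj
    have hvw : s(v, w) ∈ G'.edgeSet \ G.edgeSet := ⟨hadj, hnadj⟩
    rw [Sym2.eq_swap (a := w)]
    exact (Sym2.mem_iff.1 (f_mem _ hvw)).imp (.intro hvw) (.intro hvw)
  · rintro v w ⟨hvw, hf⟩
    exact (f_deg v ⟨_, hvw, hf⟩).2
  · refine le_trans ?_ (f_card v)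
    exact Set.ncard_le_ncard_of_injOn (fun w => s(v, w)) (fun _ hw => hw)
      (fun _ _ _ _ => Sym2.congr_right.1)

theorem IsInitiation.exists_initiator {R : V → V → Prop} (hR : IsInitiation G G' R) (e : Sym2 V)
    (he : e ∈ G'.edgeSet \ G.edgeSet) : ∃ v w, R v w ∧ s(v, w) = e := by
  induction e with
  | _ v w =>
    rcases hR.rel_or_rel he.1 he.2 with hvw | hwv
    · exact ⟨v, w, hvw, rfl⟩
    · exact ⟨w, v, hwv, Sym2.eq_swap⟩

theorem IsInitiation.marcelloStep {R : V → V → Prop} (hR : IsInitiation G G' R) (hle : G ≤ G') :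
    MarcelloStep G G' := by
  have initiator (e : Sym2 V) :
      ∃ v, e ∈ G'.edgeSet \ G.edgeSet → ∃ w, R v w ∧ s(v, w) = e := by
    by_cases he : e ∈ G'.edgeSet \ G.edgeSet
    · exact (hR.exists_initiator e he).imp fun _ hv _ => hv
    · exact ⟨e.out.1, fun h => absurd h he⟩
  choose f hf using initiator
  have card_le (v : V) : ((G'.edgeSet \ G.edgeSet) ∩ {e | f e = v}).ncard ≤ mdeg G v := by
    have hsub : (G'.edgeSet \ G.edgeSet) ∩ {e | f e = v} ⊆ (fun w => s(v, w)) '' {w | R v w} := by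
      rintro e ⟨he, rfl⟩
      exact hf e he
    calc _ ≤ ((fun w => s(v, w)) '' {w | R v w}).ncard := Set.ncard_le_ncard hsub
      _ ≤ {w | R v w}.ncard := Set.ncard_image_le
      _ ≤ mdeg G v := hR.ncard_le v
  refine ⟨hle, f, fun e he => ?_, ?_, card_le⟩
  · obtain ⟨w, -, hw⟩ := hf e he
    exact Sym2.mem_iff_exists.2 ⟨w, hw.symm⟩
  · rintro v ⟨e, he, hv⟩
    have hpos : 0 < ((G'.edgeSet \ G.edgeSet) ∩ {e | f e = v}).ncard :=
      (Set.ncard_pos).2 ⟨e, he, hv⟩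
    obtain ⟨w, hw, -⟩ := hf e he
    exact ⟨hpos.trans_le (card_le v), hv ▸ hR.mdeg_lt hw⟩

theorem MarcelloStep.refl (G : SimpleGraph V) : MarcelloStep G G := by
  have hR : IsInitiation G G (fun _ _ => False) :=
    ⟨fun _ _ hadj hnadj => absurd hadj hnadj, fun _ _ => False.elim, fun _ => by simp⟩
  exact hR.marcelloStep le_rfl

end Step

section DisjointUnion

variable {α β : Type*}

theorem graphSum_mono {G G' : SimpleGraph α} {H H' : SimpleGraph β} (hG : G ≤ G') (hH : H ≤ H') :
    G ⊕g H ≤ G' ⊕g H' := by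
  rintro (_ | _) (_ | _) <;> simp only [SimpleGraph.sum_adj]
  exacts [@hG _ _, id, id, @hH _ _]

/-- The orientation of the complete bipartite graph between `α` and `β` encoded by
`R : α → β → Prop`: the edge `ab` is initiated by `a` if `R a b` holds and by `b` otherwise. -/
def crossRel (R : α → β → Prop) : α ⊕ β → α ⊕ β → Prop
  | .inl a, .inr b => R a b
  | .inr b, .inl a => ¬ R a b
  | _, _ => False

variable [Fintype α] [Fintype β]

theorem IsInitiation.sum {G G' : SimpleGraph α} {H H' : SimpleGraph β} {R : α → α → Prop}
    {S : β → β → Prop} (hR : IsInitiation G G' R) (hS : IsInitiation H H' S) :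
    IsInitiation (G ⊕g H) (G' ⊕g H') (Sum.LiftRel R S) where
  rel_or_rel := by
    rintro (v | v) (w | w) hadj hnadj
    · simpa using hR.rel_or_rel (sum_adj_inl.1 hadj) (mt sum_adj_inl.2 hnadj)
    · simp at hadj
    · simp at hadj
    · simpa using hS.rel_or_rel (sum_adj_inr.1 hadj) (mt sum_adj_inr.2 hnadj)
  mdeg_lt := by
    rintro _ _ (hvw | hvw)
    · rw [mdeg_sum_inl, Fintype.card_sum]
      have := hR.mdeg_lt hvw
      omega
    · rw [mdeg_sum_inr, Fintype.card_sum]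
      have := hS.mdeg_lt hvw
      omega
  ncard_le := by
    rintro (v | v)
    · have himage : {x | Sum.LiftRel R S (.inl v) x} = Sum.inl '' {w | R v w} := by
        ext (_ | _) <;> simp
      rw [himage, Set.ncard_image_of_injective _ Sum.inl_injective, mdeg_sum_inl]
      exact hR.ncard_le v
    · have himage : {x | Sum.LiftRel R S (.inr v) x} = Sum.inr '' {w | S v w} := by
        ext (_ | _) <;> simp
      rw [himage, Set.ncard_image_of_injective _ Sum.inr_injective, mdeg_sum_inr]
      exact hS.ncard_le v

theorem MarcelloStep.sum {G G' : SimpleGraph α} {H H' : SimpleGraph β}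
    (hG : MarcelloStep G G') (hH : MarcelloStep H H') : MarcelloStep (G ⊕g H) (G' ⊕g H') := by
  obtain ⟨R, hR⟩ := hG.exists_isInitiation
  obtain ⟨S, hS⟩ := hH.exists_isInitiation
  exact (hR.sum hS).marcelloStep (graphSum_mono hG.1 hH.1)

theorem exists_rel_ncard_lt_card (h : 2 < Fintype.card α + Fintype.card β) :
    ∃ R : α → β → Prop, (∀ a, {b | R a b}.ncard < Fintype.card α) ∧
      ∀ b, {a | ¬ R a b}.ncard < Fintype.card β := by
  rcases lt_trichotomy (Fintype.card α) (Fintype.card β) with hlt | heq | hgt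
  · refine ⟨fun _ _ => False, fun a => ?_, fun _ => ?_⟩
    · simpa using Fintype.card_pos_iff.2 ⟨a⟩
    · simpa [Set.ncard_univ] using hlt
  · let e := Fintype.equivOfCardEq heq
    refine ⟨fun a b => e a ≠ b, fun a => ?_, fun b => ?_⟩
    · rw [heq, ← Nat.card_eq_fintype_card]
      exact Set.ncard_lt_card ((Set.ne_univ_iff_exists_notMem _).2 ⟨e a, by simp⟩)
    · have hfiber : {a | ¬ e a ≠ b} = {e.symm b} := by
        ext a
        simp [Equiv.eq_symm_apply]
      rw [hfiber, Set.ncard_singleton]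
      omega
  · refine ⟨fun _ _ => True, fun _ => ?_, fun b => ?_⟩
    · simpa [Set.ncard_univ] using hgt
    · simpa using Fintype.card_pos_iff.2 ⟨b⟩

theorem isInitiation_crossRel {R : α → β → Prop} (hα : ∀ a, {b | R a b}.ncard < Fintype.card α)
    (hβ : ∀ b, {a | ¬ R a b}.ncard < Fintype.card β) :
    IsInitiation ((⊤ : SimpleGraph α) ⊕g (⊤ : SimpleGraph β)) ⊤ (crossRel R) where
  rel_or_rel := by
    rintro (v | v) (w | w) hadj hnadj
    · simp_all
    · exact em (R v w)
    · exact (em (R w v)).symm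
    · simp_all
  mdeg_lt := by
    rintro (v | v) (w | w) hvw
    · exact hvw.elim
    · have := hα v
      have := hβ w
      rw [mdeg_sum_inl, mdeg_top, Fintype.card_sum]
      omega
    · have := hα w
      have := hβ v
      rw [mdeg_sum_inr, mdeg_top, Fintype.card_sum]
      omega
    · exact hvw.elim
  ncard_le := by
    rintro (v | v)
    · have himage : {x | crossRel R (.inl v) x} = Sum.inr '' {b | R v b} := by
        ext (_ | _) <;> simp [crossRel]
      rw [himage, Set.ncard_image_of_injective _ Sum.inr_injective, mdeg_sum_inl, mdeg_top]
      exact Nat.le_sub_one_of_lt (hα v)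
    · have himage : {x | crossRel R (.inr v) x} = Sum.inl '' {a | ¬ R a v} := by
        ext (_ | _) <;> simp [crossRel]
      rw [himage, Set.ncard_image_of_injective _ Sum.inl_injective, mdeg_sum_inr, mdeg_top]
      exact Nat.le_sub_one_of_lt (hβ v)

theorem marcelloStep_top_sum_top (h : 2 < Fintype.card α + Fintype.card β) :
    MarcelloStep ((⊤ : SimpleGraph α) ⊕g (⊤ : SimpleGraph β)) ⊤ := by
  obtain ⟨R, hα, hβ⟩ := exists_rel_ncard_lt_card h
  exact (isInitiation_crossRel hα hβ).marcelloStep le_top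

end DisjointUnion

namespace MarcelloChain

variable {V : Type*} [Fintype V] {G H K : SimpleGraph V} {k l : ℕ}

theorem snoc (hGH : MarcelloChain G H k) (hHK : MarcelloStep H K) : MarcelloChain G K (k + 1) := by
  obtain ⟨c, c_zero, c_last, c_step⟩ := hGH
  refine ⟨Function.update c (k + 1) K, by simpa using c_zero, by simp, fun i hi => ?_⟩
  rw [Function.update_of_ne hi.ne]
  obtain hlt | rfl := Nat.lt_succ_iff_lt_or_eq.1 hi
  · rw [Function.update_of_ne (by omega)]
    exact c_step i hlt
  · rwa [Function.update_self, c_last]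

theorem mono_length (h : MarcelloChain G H k) (hkl : k ≤ l) : MarcelloChain G H l := by
  induction l, hkl using Nat.le_induction with
  | base => exact h
  | succ l _ ih => exact ih.snoc (.refl H)

theorem sum {α β : Type*} [Fintype α] [Fintype β] {G G' : SimpleGraph α} {H H' : SimpleGraph β}
    (hG : MarcelloChain G G' k) (hH : MarcelloChain H H' k) :
    MarcelloChain (G ⊕g H) (G' ⊕g H') k := by
  obtain ⟨c, rfl, rfl, c_step⟩ := hG
  obtain ⟨d, rfl, rfl, d_step⟩ := hH
  exact ⟨fun i => c i ⊕g d i, rfl, rfl, fun i hi => (c_step i hi).sum (d_step i hi)⟩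

end MarcelloChain

/-- `ϖ(G ∪ H) ≤ max{ϖ(G)+1, ϖ(H)+1}` for `G` with an edge on `n ≥ 2` vertices and `H`
on `m ≥ 1` vertices. -/
theorem marcello_disjUnion_le {α β : Type*} [Fintype α] [Fintype β]
    (G : SimpleGraph α) (H : SimpleGraph β)
    (hn : 2 ≤ Fintype.card α) (hm : 1 ≤ Fintype.card β) (hE : G.edgeSet.Nonempty)
    (a b : ℕ) (hGa : MarcelloChain G (⊤ : SimpleGraph α) a)
    (hHb : MarcelloChain H (⊤ : SimpleGraph β) b) :
    ∃ k ≤ max a b + 1, MarcelloChain (G ⊕g H) (⊤ : SimpleGraph (α ⊕ β)) k := by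
  have both_complete : MarcelloChain (G ⊕g H) (⊤ ⊕g ⊤) (max a b) :=
    (hGa.mono_length (le_max_left a b)).sum (hHb.mono_length (le_max_right a b))
  have join_parts : MarcelloStep ((⊤ : SimpleGraph α) ⊕g (⊤ : SimpleGraph β)) ⊤ :=
    marcelloStep_top_sum_top (by omega)
  exact ⟨max a b + 1, le_rfl, both_complete.snoc join_parts⟩
end

section
/- Let 1 ≤ m ≤ n with m + n ≥ 3, and let K_{m,n} be the complete bipartite graph with parts of sizes m and n (equivalently, the join of the empty graphs N_m and N_n). Then there is a Marcello step from K_{m,n} to the complete graph on its m + n vertices (i.e., ϖ(N_m + N_n) = 1) if and only if n ≤ 2m + 1. -/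
open SimpleGraph

attribute [local instance] Classical.propDecidable

/-!
In a Marcello step every new edge is directed out of its initiator, so a step from `G` to `G'` is an
orientation of the graph of new edges in which the out-degree of `v` is at most `deg_G v` and only
vertices of admissible degree have out-neighbours. For `K_{m,n}` and the complete graph, the new
edges form the disjoint union of the complete graphs on the two parts, and each vertex of a part has
as degree the size of the other part. It remains to see that `K_k` has an orientation with
out-degrees at most `d` exactly when `k ≤ 2 * d + 1`: counting edges gives
`k * (k - 1) / 2 ≤ k * d`, and conversely `K_k` embeds into the circular tournament on
`ZMod (2 * d + 1)`, where `a` points to `a + 1, …, a + d`.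
-/

/-- The relation `r` is a biorientation of the graph `H`: its arcs `r v w`, from `v` to `w`, are
obtained by directing each edge of `H` in at least one of its two directions. Allowing both
directions is harmless here, as only upper bounds on out-degrees matter. -/
def IsBiorientation {V : Type*} (r : V → V → Prop) (H : SimpleGraph V) : Prop :=
  ∀ v w, H.Adj v w ↔ r v w ∨ r w v

/-- The out-degree of `v` in the digraph with arcs `r`; it is `0` if `v` has infinitely many
out-neighbours. -/
noncomputable def outDegree {V : Type*} (r : V → V → Prop) (v : V) : ℕ :=
  {w | r v w}.ncard

section Biorientation

variable {V W : Type*} {r : V → V → Prop} {s : W → W → Prop} {G : SimpleGraph V} {H : SimpleGraph W}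

lemma IsBiorientation.one_lt_card [Fintype V] (hr : IsBiorientation r G) {v w : V} (hvw : r v w) :
    1 < Fintype.card V :=
  Fintype.one_lt_card_iff.2 ⟨v, w, ((hr v w).2 (.inl hvw)).ne⟩

lemma IsBiorientation.preimage (hs : IsBiorientation s H) (f : G ↪g H) :
    IsBiorientation (f ⁻¹'o s) G :=
  fun v w => f.map_adj_iff.symm.trans (hs (f v) (f w))

lemma outDegree_preimage_le [Finite W] {f : V → W} (hf : f.Injective) (v : V) :
    outDegree (f ⁻¹'o s) v ≤ outDegree s (f v) :=
  Set.ncard_le_ncard_of_injOn f (fun _ hw => hw) hf.injOn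

lemma IsBiorientation.sumLiftRel (hr : IsBiorientation r G) (hs : IsBiorientation s H) :
    IsBiorientation (Sum.LiftRel r s) (G ⊕g H) := by
  rintro (v | v) (w | w)
  · simpa using hr v w
  · simp
  · simp
  · simpa using hs v w

lemma outDegree_sumLiftRel_inl (v : V) :
    outDegree (Sum.LiftRel r s) (Sum.inl v) = outDegree r v := by
  have out_eq_image : {x | Sum.LiftRel r s (Sum.inl v) x} = Sum.inl '' {w | r v w} := by
    ext (w | w) <;> simp
  rw [outDegree, out_eq_image, Set.ncard_image_of_injective _ Sum.inl_injective, outDegree]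

lemma outDegree_sumLiftRel_inr (w : W) :
    outDegree (Sum.LiftRel r s) (Sum.inr w) = outDegree s w := by
  have out_eq_image : {x | Sum.LiftRel r s (Sum.inr w) x} = Sum.inr '' {w' | s w w'} := by
    ext (w' | w') <;> simp
  rw [outDegree, out_eq_image, Set.ncard_image_of_injective _ Sum.inr_injective, outDegree]

lemma IsBiorientation.ncard_edgeSet_le_sum_outDegree [Fintype V] (hr : IsBiorientation r G) :
    G.edgeSet.ncard ≤ ∑ v, outDegree r v := by
  have edgeSet_subset : G.edgeSet ⊆ ⋃ v, (s(v, ·)) '' {w | r v w} := by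
    rintro ⟨v, w⟩ hvw
    rcases (hr v w).1 hvw with hvw | hwv
    · exact Set.mem_iUnion.2 ⟨v, w, hvw, rfl⟩
    · exact Set.mem_iUnion.2 ⟨w, v, hwv, Sym2.eq_swap⟩
  calc G.edgeSet.ncard
      ≤ (⋃ v, (s(v, ·)) '' {w | r v w}).ncard := Set.ncard_le_ncard edgeSet_subset
    _ ≤ ∑ v, ((s(v, ·)) '' {w | r v w}).ncard := Set.ncard_iUnion_le_of_fintype _
    _ ≤ ∑ v, outDegree r v := Finset.sum_le_sum fun _ _ => Set.ncard_image_le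

lemma IsBiorientation.card_le_of_outDegree_le [Fintype V] {d : ℕ}
    (hr : IsBiorientation r (⊤ : SimpleGraph V)) (hd : ∀ v, outDegree r v ≤ d) :
    Fintype.card V ≤ 2 * d + 1 := by
  set k := Fintype.card V with hk
  have choose_le : k.choose 2 ≤ k * d := by
    calc k.choose 2
        = (⊤ : SimpleGraph V).edgeSet.ncard := by
          rw [← card_edgeFinset_top_eq_card_choose_two, ← Set.ncard_coe_finset, coe_edgeFinset]
      _ ≤ ∑ v, outDegree r v := hr.ncard_edgeSet_le_sum_outDegree
      _ ≤ k * d := by simpa [hk] using Finset.sum_le_card_nsmul Finset.univ _ d fun v _ => hd v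
  rcases k.eq_zero_or_pos with hk0 | hkpos
  · omega
  · have mul_pred_le : k * (k - 1) ≤ k * (2 * d) := by
      rw [← Nat.div_two_mul_two_of_even k.even_mul_pred_self, ← Nat.choose_two_right]
      linarith
    have := Nat.le_of_mul_le_mul_left mul_pred_le hkpos
    omega

end Biorientation

/-- The circular tournament on `ZMod (2 * d + 1)`: every `a` has an arc to each of
`a + 1, …, a + d`. -/
def circularTournament (d : ℕ) (a b : ZMod (2 * d + 1)) : Prop :=
  (b - a).val ∈ Set.Icc 1 d

lemma isBiorientation_circularTournament (d : ℕ) : IsBiorientation (circularTournament d) ⊤ := by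
  intro a b
  simp only [top_adj, circularTournament, Set.mem_Icc]
  rcases eq_or_ne a b with rfl | hab
  · simp
  · have val_pos : 0 < (b - a).val := ZMod.val_pos.2 (sub_ne_zero.2 hab.symm)
    have val_lt : (b - a).val < 2 * d + 1 := (b - a).val_lt
    have val_sub_swap : (a - b).val = 2 * d + 1 - (b - a).val := by
      rw [← neg_sub b a, ZMod.neg_val, if_neg (sub_ne_zero.2 hab.symm)]
    simp only [ne_eq, hab, not_false_eq_true, true_iff]
    omega

lemma outDegree_circularTournament_le (d : ℕ) (a : ZMod (2 * d + 1)) :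
    outDegree (circularTournament d) a ≤ d := by
  have val_sub_injective : Function.Injective fun b => (b - a).val :=
    (ZMod.val_injective _).comp (sub_left_injective (b := a))
  calc outDegree (circularTournament d) a
      ≤ (Set.Icc 1 d).ncard :=
        Set.ncard_le_ncard_of_injOn _ (fun _ hb => hb) val_sub_injective.injOn
    _ = d := by simp

theorem exists_isBiorientation_top_outDegree_le_iff {V : Type*} [Fintype V] {d : ℕ} :
    (∃ r, IsBiorientation r (⊤ : SimpleGraph V) ∧ ∀ v, outDegree r v ≤ d) ↔
      Fintype.card V ≤ 2 * d + 1 := by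
  refine ⟨fun ⟨r, hr, hd⟩ => hr.card_le_of_outDegree_le hd, fun hcard => ?_⟩
  obtain ⟨f⟩ : Nonempty (V ↪ ZMod (2 * d + 1)) :=
    Function.Embedding.nonempty_of_card_le (by rwa [ZMod.card])
  exact ⟨f ⁻¹'o circularTournament d,
    (isBiorientation_circularTournament d).preimage (Embedding.completeGraph f),
    fun v => (outDegree_preimage_le f.injective v).trans (outDegree_circularTournament_le d (f v))⟩

section MarcelloStep

variable {V : Type*} [Fintype V] {G G' : SimpleGraph V}

lemma MarcelloStep.exists_isBiorientation (h : MarcelloStep G G') :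
    ∃ r, IsBiorientation r (G' \ G) ∧ ∀ v, outDegree r v ≤ mdeg G v := by
  obtain ⟨-, f, f_mem, -, card_fiber_le⟩ := h
  rw [← edgeSet_sdiff] at f_mem card_fiber_le
  refine ⟨fun v w => (G' \ G).Adj v w ∧ f s(v, w) = v, fun v w => ?_, fun v => ?_⟩
  · have f_eq (hvw : (G' \ G).Adj v w) : f s(v, w) = v ∨ f s(v, w) = w :=
      Sym2.mem_iff.1 (f_mem s(v, w) hvw)
    simp only [(G' \ G).adj_comm w v, Sym2.eq_swap (a := w)]
    tauto
  · refine (Set.ncard_le_ncard_of_injOn (s(v, ·)) (fun _ hw => hw) ?_).trans (card_fiber_le v)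
    exact fun _ _ _ _ => Sym2.congr_right.1

lemma MarcelloStep.of_isBiorientation {r : V → V → Prop} (hle : G ≤ G')
    (hr : IsBiorientation r (G' \ G))
    (mdeg_mem : ∀ v w, r v w → 0 < mdeg G v ∧ mdeg G v < Fintype.card V - 1)
    (outDegree_le : ∀ v, outDegree r v ≤ mdeg G v) : MarcelloStep G G' := by
  have exists_initiator (e : Sym2 V) :
      ∃ v, e ∈ (G' \ G).edgeSet → ∃ w, r v w ∧ e = s(v, w) := by
    induction e with | _ v w =>
    by_cases hvw : r v w
    · exact ⟨v, fun _ => ⟨w, hvw, rfl⟩⟩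
    · exact ⟨w, fun he => ⟨v, ((hr v w).1 he).resolve_left hvw, Sym2.eq_swap⟩⟩
  choose f hf using exists_initiator
  refine ⟨hle, f, ?_⟩
  rw [← edgeSet_sdiff]
  refine ⟨fun e he => ?_, ?_, fun v => ?_⟩
  · obtain ⟨w, -, he⟩ := hf e he
    exact Sym2.mem_iff_exists.2 ⟨w, he⟩
  · rintro _ ⟨e, he, rfl⟩
    obtain ⟨w, hw, -⟩ := hf e he
    exact mdeg_mem _ w hw
  · have fiber_subset : (G' \ G).edgeSet ∩ {e | f e = v} ⊆ (s(v, ·)) '' {w | r v w} := by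
      rintro e ⟨he, rfl⟩
      obtain ⟨w, hw, he⟩ := hf e he
      exact ⟨w, hw, he.symm⟩
    calc ((G' \ G).edgeSet ∩ {e | f e = v}).ncard
        ≤ ((s(v, ·)) '' {w | r v w}).ncard := Set.ncard_le_ncard fiber_subset
      _ ≤ outDegree r v := Set.ncard_image_le
      _ ≤ mdeg G v := outDegree_le v

lemma MarcelloStep.card_le_of_embedding_top {W : Type*} [Fintype W] {d : ℕ}
    (h : MarcelloStep G G') (f : (⊤ : SimpleGraph W) ↪g G' \ G) (hd : ∀ w, mdeg G (f w) ≤ d) :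
    Fintype.card W ≤ 2 * d + 1 := by
  obtain ⟨r, hr, outDegree_le⟩ := h.exists_isBiorientation
  refine exists_isBiorientation_top_outDegree_le_iff.1 ⟨f ⁻¹'o r, hr.preimage f, fun w => ?_⟩
  calc outDegree (f ⁻¹'o r) w
      ≤ outDegree r (f w) := outDegree_preimage_le f.injective w
    _ ≤ mdeg G (f w) := outDegree_le (f w)
    _ ≤ d := hd w

end MarcelloStep

section CompleteBipartite

variable {α β : Type*}

lemma top_sdiff_completeBipartiteGraph :
    (⊤ : SimpleGraph (α ⊕ β)) \ completeBipartiteGraph α β = ⊤ ⊕g ⊤ := by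
  ext (a | b) (a' | b') <;> simp

lemma mdeg_completeBipartiteGraph_inl (a : α) :
    mdeg (completeBipartiteGraph α β) (Sum.inl a) = Nat.card β := by
  have neighborSet_eq :
      (completeBipartiteGraph α β).neighborSet (Sum.inl a) = Set.range Sum.inr := by
    ext (a' | b) <;> simp
  rw [mdeg, neighborSet_eq, ← Set.image_univ, Set.ncard_image_of_injective _ Sum.inr_injective,
    Set.ncard_univ]

lemma mdeg_completeBipartiteGraph_inr (b : β) :
    mdeg (completeBipartiteGraph α β) (Sum.inr b) = Nat.card α := by
  have neighborSet_eq :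
      (completeBipartiteGraph α β).neighborSet (Sum.inr b) = Set.range Sum.inl := by
    ext (a | b') <;> simp
  rw [mdeg, neighborSet_eq, ← Set.image_univ, Set.ncard_image_of_injective _ Sum.inl_injective,
    Set.ncard_univ]

variable [Fintype α] [Fintype β]

lemma marcelloStep_completeBipartiteGraph_top (hα : Fintype.card α ≤ 2 * Fintype.card β + 1)
    (hβ : Fintype.card β ≤ 2 * Fintype.card α + 1) :
    MarcelloStep (completeBipartiteGraph α β) ⊤ := by
  obtain ⟨r, hr, outDegree_r_le⟩ := exists_isBiorientation_top_outDegree_le_iff.2 hα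
  obtain ⟨s, hs, outDegree_s_le⟩ := exists_isBiorientation_top_outDegree_le_iff.2 hβ
  refine .of_isBiorientation (r := Sum.LiftRel r s) le_top ?_ ?_ ?_
  · rw [top_sdiff_completeBipartiteGraph]
    exact hr.sumLiftRel hs
  · rintro _ _ (⟨haa'⟩ | ⟨hbb'⟩)
    · have := hr.one_lt_card haa'
      rw [mdeg_completeBipartiteGraph_inl, Nat.card_eq_fintype_card, Fintype.card_sum]
      omega
    · have := hs.one_lt_card hbb'
      rw [mdeg_completeBipartiteGraph_inr, Nat.card_eq_fintype_card, Fintype.card_sum]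
      omega
  · rintro (a | b)
    · rw [outDegree_sumLiftRel_inl, mdeg_completeBipartiteGraph_inl, Nat.card_eq_fintype_card]
      exact outDegree_r_le a
    · rw [outDegree_sumLiftRel_inr, mdeg_completeBipartiteGraph_inr, Nat.card_eq_fintype_card]
      exact outDegree_s_le b

theorem marcello_completeBipartite_iff_general :
    MarcelloStep (completeBipartiteGraph α β) ⊤ ↔
      Fintype.card α ≤ 2 * Fintype.card β + 1 ∧ Fintype.card β ≤ 2 * Fintype.card α + 1 := by
  refine ⟨fun h => ?_, fun ⟨hα, hβ⟩ => marcelloStep_completeBipartiteGraph_top hα hβ⟩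
  constructor
  · refine h.card_le_of_embedding_top ⟨.inl, by simp⟩ fun a => ?_
    rw [← Nat.card_eq_fintype_card]
    exact (mdeg_completeBipartiteGraph_inl a).le
  · refine h.card_le_of_embedding_top ⟨.inr, by simp⟩ fun b => ?_
    rw [← Nat.card_eq_fintype_card]
    exact (mdeg_completeBipartiteGraph_inr b).le

end CompleteBipartite

/-- For `1 ≤ m ≤ n` with `m + n ≥ 3`, one Marcello step completes `K_{m,n}`
if and only if `n ≤ 2m + 1`. -/
theorem marcello_completeBipartite_iff (m n : ℕ) (hm : 1 ≤ m) (hmn : m ≤ n)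
    (h3 : 3 ≤ m + n) :
    MarcelloStep (completeBipartiteGraph (Fin m) (Fin n))
        (⊤ : SimpleGraph (Fin m ⊕ Fin n)) ↔ n ≤ 2 * m + 1 := by
  rw [marcello_completeBipartite_iff_general, Fintype.card_fin, Fintype.card_fin]
  omega
end

section
/- For every n with 3 ≤ n ≤ 6, there is a Marcello step from the path graph P_n (vertices v_1, …, v_n with edges v_i v_{i+1} for 1 ≤ i ≤ n−1) to the complete graph on its n vertices; since P_n is not complete for n ≥ 3, ϖ(P_n) = 1 for n = 3, 4, 5, 6. -/
open SimpleGraph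

attribute [local instance] Classical.propDecidable

/-!
A vertex initiating a new edge misses a neighbour, so its degree is automatically less than `n - 1`,
and only the count of initiated edges is a constraint. For the path, the `n - 2` inner vertices may
initiate two edges each and the two ends one each; for `3 ≤ n ≤ 6` an explicit distribution of the
`(n - 1) * (n - 2) / 2` missing edges respects these bounds. At `n = 6` there are ten missing edges
and the degrees sum to ten, so every vertex exhausts its capacity.
-/

section MarcelloStep

variable {V : Type*} [Fintype V] {G G' : SimpleGraph V}

theorem mdeg_lt_card_sub_one_of_not_adj {v w : V} (hne : v ≠ w) (hadj : ¬G.Adj v w) :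
    mdeg G v < Fintype.card V - 1 := by
  have hssub : G.neighborSet v ⊂ {v}ᶜ :=
    ⟨fun _ hu => G.ne_of_adj hu.symm, fun hsup => hadj (hsup hne.symm)⟩
  calc mdeg G v < ({v}ᶜ : Set V).ncard := Set.ncard_lt_ncard hssub
    _ = Fintype.card V - 1 := by
      rw [Set.ncard_compl, Set.ncard_singleton, Nat.card_eq_fintype_card]

theorem mdeg_lt_card_sub_one_of_mem_new_edge {v : V} {e : Sym2 V}
    (he : e ∈ G'.edgeSet \ G.edgeSet) (hv : v ∈ e) : mdeg G v < Fintype.card V - 1 := by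
  obtain ⟨w, rfl⟩ := hv
  exact mdeg_lt_card_sub_one_of_not_adj (G'.ne_of_adj he.1) he.2

theorem marcelloStep_iff :
    MarcelloStep G G' ↔ G ≤ G' ∧ ∃ f : Sym2 V → V,
      (∀ e ∈ G'.edgeSet \ G.edgeSet, f e ∈ e) ∧
      ∀ v, ((G'.edgeSet \ G.edgeSet) ∩ {e | f e = v}).ncard ≤ mdeg G v := by
  refine and_congr_right fun _ => exists_congr fun f => and_congr_right fun hmem =>
    and_iff_right_of_imp fun hcard => ?_
  rintro _ ⟨e, he, rfl⟩
  have hpos : 0 < ((G'.edgeSet \ G.edgeSet) ∩ {e' | f e' = f e}).ncard :=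
    (Set.ncard_pos (Set.toFinite _)).mpr ⟨e, he, rfl⟩
  exact ⟨hpos.trans_le (hcard (f e)), mdeg_lt_card_sub_one_of_mem_new_edge he (hmem e he)⟩

theorem MarcelloStep.of_targets (t : V → Finset V) (hle : G ≤ G')
    (hcover : ∀ v w, G'.Adj v w → G.Adj v w ∨ w ∈ t v ∨ v ∈ t w)
    (hcard : ∀ v, (t v).card ≤ mdeg G v) : MarcelloStep G G' := by
  have hinit : ∀ e : Sym2 V, ∃ v, e ∈ G'.edgeSet \ G.edgeSet → ∃ w ∈ t v, s(v, w) = e := by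
    refine Sym2.ind fun v w => ?_
    by_cases hwv : w ∈ t v
    · exact ⟨v, fun _ => ⟨w, hwv, rfl⟩⟩
    · refine ⟨w, fun he => ⟨v, ?_, Sym2.eq_swap⟩⟩
      exact ((hcover v w he.1).resolve_left he.2).resolve_left hwv
  choose f hf using hinit
  refine marcelloStep_iff.mpr ⟨hle, f, fun e he => ?_, fun v => ?_⟩
  · obtain ⟨w, -, hw⟩ := hf e he
    exact ⟨w, hw.symm⟩
  · have hsub : (G'.edgeSet \ G.edgeSet) ∩ {e | f e = v} ⊆ (fun w => s(v, w)) '' t v := by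
      rintro e ⟨he, rfl⟩
      exact hf e he
    calc _ ≤ ((fun w => s(v, w)) '' (t v : Set V)).ncard := Set.ncard_le_ncard hsub
      _ ≤ (t v : Set V).ncard := Set.ncard_image_le
      _ = (t v).card := Set.ncard_coe_finset _
      _ ≤ mdeg G v := hcard v

end MarcelloStep

section MarcelloNumber

variable {V : Type*} [Fintype V] {G H : SimpleGraph V}

theorem marcelloChain_zero_iff : MarcelloChain G H 0 ↔ G = H := by
  constructor
  · rintro ⟨c, rfl, rfl, -⟩
    rfl
  · rintro rfl
    exact ⟨fun _ => G, rfl, rfl, by simp⟩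

theorem marcelloChain_one_iff : MarcelloChain G H 1 ↔ MarcelloStep G H := by
  constructor
  · rintro ⟨c, rfl, rfl, hstep⟩
    exact hstep 0 one_pos
  · intro hstep
    refine ⟨fun i => if i = 0 then G else H, if_pos rfl, if_neg one_ne_zero, fun i hi => ?_⟩
    obtain rfl : i = 0 := Nat.lt_one_iff.mp hi
    simpa using hstep

theorem marcelloChain_marcelloNumber {k : ℕ} (hk : MarcelloChain G ⊤ k) :
    MarcelloChain G ⊤ (marcelloNumber G) :=
  Nat.sInf_mem (s := {k | MarcelloChain G ⊤ k}) ⟨k, hk⟩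

theorem marcelloNumber_eq_one_iff : marcelloNumber G = 1 ↔ MarcelloStep G ⊤ ∧ G ≠ ⊤ := by
  rw [← marcelloChain_one_iff, Ne, ← marcelloChain_zero_iff]
  constructor
  · intro h
    obtain ⟨k, hk⟩ := Nat.nonempty_of_sInf_eq_succ h
    exact ⟨h ▸ marcelloChain_marcelloNumber hk,
      Nat.notMem_of_lt_sInf (h ▸ one_pos : 0 < marcelloNumber G)⟩
  · rintro ⟨hone, hzero⟩
    have hne : marcelloNumber G ≠ 0 := fun h => hzero (h ▸ marcelloChain_marcelloNumber hone)
    exact le_antisymm (Nat.sInf_le hone) (Nat.one_le_iff_ne_zero.mpr hne)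

end MarcelloNumber

section PathGraph

variable {n : ℕ}

theorem pathGraph_ne_top (hn : 3 ≤ n) : pathGraph n ≠ ⊤ := by
  intro htop
  have hadj : (pathGraph n).Adj ⟨0, by lia⟩ ⟨2, by lia⟩ := by simp [htop]
  simp [pathGraph_adj] at hadj

theorem ncard_setOf_val_add_one_eq (v : Fin (n + 1)) :
    {w : Fin (n + 1) | (w : ℕ) + 1 = v}.ncard = if v = 0 then 0 else 1 := by
  cases v using Fin.cases with
  | zero => simp
  | succ u =>
    have hset : {w : Fin (n + 1) | (w : ℕ) + 1 = u.succ} = {u.castSucc} := by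
      ext w
      simp [Fin.ext_iff]
    rw [hset]
    simp

theorem ncard_setOf_eq_val_add_one (v : Fin (n + 1)) :
    {w : Fin (n + 1) | (v : ℕ) + 1 = w}.ncard = if v = Fin.last n then 0 else 1 := by
  cases v using Fin.lastCases with
  | last =>
    have hset : {w : Fin (n + 1) | (Fin.last n : ℕ) + 1 = w} = ∅ :=
      Set.eq_empty_of_forall_notMem fun w => w.isLt.ne'
    rw [hset]
    simp
  | cast u =>
    have hset : {w : Fin (n + 1) | (u.castSucc : ℕ) + 1 = w} = {u.succ} := by
      ext w
      simp [Fin.ext_iff, eq_comm]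
    rw [hset]
    simp

theorem mdeg_pathGraph (v : Fin (n + 1)) :
    mdeg (pathGraph (n + 1)) v =
      (if v = 0 then 0 else 1) + if v = Fin.last n then 0 else 1 := by
  have hunion : (pathGraph (n + 1)).neighborSet v =
      {w : Fin (n + 1) | (w : ℕ) + 1 = v} ∪ {w : Fin (n + 1) | (v : ℕ) + 1 = w} := by
    ext w
    simp [pathGraph_adj, or_comm]
  have hdisj : Disjoint {w : Fin (n + 1) | (w : ℕ) + 1 = v} {w | (v : ℕ) + 1 = w} :=
    Set.disjoint_left.mpr fun w (hpred : (w : ℕ) + 1 = v) (hsucc : (v : ℕ) + 1 = w) => by lia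
  rw [mdeg, hunion, Set.ncard_union_eq hdisj, ncard_setOf_val_add_one_eq,
    ncard_setOf_eq_val_add_one]

theorem marcelloStep_pathGraph_top (h3 : 3 ≤ n) (h6 : n ≤ 6) :
    MarcelloStep (pathGraph n) ⊤ := by
  interval_cases n
  · apply MarcelloStep.of_targets ![{2}, ∅, ∅] le_top <;>
      simp [Fin.forall_fin_succ, pathGraph_adj, mdeg_pathGraph]
  · apply MarcelloStep.of_targets ![∅, {3}, {0}, {0}] le_top <;>
      simp [Fin.forall_fin_succ, pathGraph_adj, mdeg_pathGraph]
  · apply MarcelloStep.of_targets ![∅, {4}, {0, 4}, {0, 1}, {0}] le_top <;>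
      simp [Fin.forall_fin_succ, pathGraph_adj, mdeg_pathGraph]
  · apply MarcelloStep.of_targets ![{5}, {4, 5}, {0, 5}, {0, 1}, {0, 2}, {3}] le_top <;>
      simp [Fin.forall_fin_succ, pathGraph_adj, mdeg_pathGraph]

end PathGraph

/-- For `3 ≤ n ≤ 6`, one Marcello step completes the path `P_n`, and `ϖ(P_n) = 1`. -/
theorem marcello_path_small (n : ℕ) (h3 : 3 ≤ n) (h6 : n ≤ 6) :
    MarcelloStep (SimpleGraph.pathGraph n) (⊤ : SimpleGraph (Fin n)) ∧
      marcelloNumber (SimpleGraph.pathGraph n) = 1 := by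
  have hstep := marcelloStep_pathGraph_top h3 h6
  exact ⟨hstep, marcelloNumber_eq_one_iff.mpr ⟨hstep, pathGraph_ne_top h3⟩⟩
end

section
/- Let n ≥ 3 and let S_{1,n} be the star on n + 1 vertices (one center adjacent to n pairwise non-adjacent leaves). If there is a Marcello chain of length k from the cycle graph C_n to the complete graph K_n, then there is a Marcello chain of length at most k + 1 from S_{1,n} to the complete graph K_{n+1}; hence ϖ(S_{1,n}) ≤ ϖ(C_n) + 1. -/
open SimpleGraph

attribute [local instance] Classical.propDecidable

/-- The join of two graphs. -/
def graphJoin {α β : Type*} (G : SimpleGraph α) (H : SimpleGraph β) :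
    SimpleGraph (α ⊕ β) :=
  (G ⊕g H) ⊔ completeBipartiteGraph α β

/-!
In the join `K + G` with a fixed graph `K` on a set of `r` vertices, every vertex of `G` gains `r`
neighbors while the missing edges within `G` stay the same. A step from `G` to `G'` is therefore
still a step from `K + G` to `K + G'`, and every vertex of `G` may even initiate `r` edges more. The
extra budget makes up for isolated vertices: each vertex of the cycle can be charged with the edge
to its successor, so that one step leads from the star `K_1 + N_n` to the wheel `K_1 + C_n`, and the
given chain for `C_n` takes the wheel to `K_1 + K_n = K_{n+1}`.
-/

/-- The edges in `E` can be assigned to initiating endpoints so that each vertex `v` initiates at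
most `b v` of them; equivalently, `E` has an orientation with out-degrees bounded by `b`. The values
of the assignment `f` outside `E` are irrelevant. Meant for finite `E`, as `Set.ncard` counts an
infinite set as `0`. -/
def OrientableWithin {V : Type*} (E : Set (Sym2 V)) (b : V → ℕ) : Prop :=
  ∃ f : Sym2 V → V, (∀ e ∈ E, f e ∈ e) ∧ ∀ v, (E ∩ {e | f e = v}).ncard ≤ b v

namespace OrientableWithin

variable {V W : Type*} {E : Set (Sym2 V)}

theorem mono {b b' : V → ℕ} (hE : OrientableWithin E b) (hb : b ≤ b') : OrientableWithin E b' :=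
  let ⟨f, hf, hfb⟩ := hE
  ⟨f, hf, fun v => (hfb v).trans (hb v)⟩

theorem image_map {g : V → W} (hg : g.Injective) {b : W → ℕ} (hE : OrientableWithin E (b ∘ g)) :
    OrientableWithin (Sym2.map g '' E) b := by
  obtain ⟨f, hf, hfb⟩ := hE
  have hmap : (Sym2.map g).Injective := Sym2.map.injective hg
  let f' : Sym2 W → W := Function.extend (Sym2.map g) (g ∘ f) fun e => (Quot.out e).1
  have hf' (e : Sym2 V) : f' (Sym2.map g e) = g (f e) := hmap.extend_apply _ _ e
  refine ⟨f', ?_, fun w => ?_⟩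
  · rintro _ ⟨e, he, rfl⟩
    rw [hf']
    exact Sym2.mem_map.2 ⟨f e, hf e he, rfl⟩
  have hfiber : Sym2.map g '' E ∩ {e | f' e = w} = Sym2.map g '' (E ∩ {e | g (f e) = w}) := by
    rw [← Set.image_inter_preimage]
    simp only [Set.preimage_ofPred_eq, hf']
  rw [hfiber, Set.ncard_image_of_injective _ hmap]
  by_cases hw : ∃ v, g v = w
  · obtain ⟨v, rfl⟩ := hw
    simpa only [hg.eq_iff, Function.comp_apply] using hfb v
  · have hempty : {e | g (f e) = w} = ∅ := Set.eq_empty_of_forall_notMem fun e he => hw ⟨f e, he⟩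
    simp [hempty]

theorem of_subset_range {σ : V → V} (hE : E ⊆ Set.range fun v => s(v, σ v)) :
    OrientableWithin E fun _ => 1 := by
  have hsource (e : Sym2 V) : ∃ v, e ∈ E → s(v, σ v) = e := by
    by_cases he : e ∈ E
    · exact (hE he).imp fun v hv _ => hv
    · exact ⟨(Quot.out e).1, fun h => absurd h he⟩
  choose f hf using hsource
  refine ⟨f, fun e he => ?_, fun v => ?_⟩
  · simpa only [hf e he] using Sym2.mem_mk_left (f e) (σ (f e))
  · have hfiber : E ∩ {e | f e = v} ⊆ {s(v, σ v)} := by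
      rintro e ⟨he, rfl⟩
      exact (hf e he).symm
    simpa only [Set.ncard_singleton] using Set.ncard_le_ncard hfiber

end OrientableWithin

theorem cycleGraph_edgeSet_subset_range (n : ℕ) :
    (cycleGraph n).edgeSet ⊆ Set.range fun v => s(v, finRotate n v) := by
  cases n with
  | zero => exact fun e => e.ind fun u _ _ => u.elim0
  | succ n =>
    rw [cycleGraph_eq_circulantGraph]
    intro e
    induction e with | _ u v
    simp only [mem_edgeSet, circulantGraph_adj, Set.mem_singleton_iff, sub_eq_iff_eq_add',
      finRotate_apply]
    rintro ⟨-, rfl | rfl⟩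
    · exact ⟨v, Sym2.eq_swap⟩
    · exact ⟨u, rfl⟩

theorem mdeg_lt_card_sub_one {V : Type*} [Fintype V] {G : SimpleGraph V} {v w : V} (hne : v ≠ w)
    (hvw : ¬G.Adj v w) : mdeg G v < Fintype.card V - 1 := by
  have hsub : G.neighborSet v ⊆ {v, w}ᶜ := by
    rintro x hx (rfl | rfl)
    exacts [G.irrefl hx, hvw hx]
  have hcard : ({v, w}ᶜ : Set V).ncard + 2 = Fintype.card V := by
    rw [← Set.ncard_pair hne, add_comm, Set.ncard_add_ncard_compl, Nat.card_eq_fintype_card]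
  have hle := Set.ncard_le_ncard hsub
  unfold mdeg
  omega

/-- The degree conditions on initiators are automatic: an initiator of a new edge has a
non-neighbor, and the bound on the number of edges it initiates is positive. -/
theorem marcelloStep_iff_s16 {V : Type*} [Fintype V] {G G' : SimpleGraph V} :
    MarcelloStep G G' ↔ G ≤ G' ∧ OrientableWithin (G'.edgeSet \ G.edgeSet) (mdeg G) := by
  refine and_congr_right fun _ => exists_congr fun f => and_congr_right fun hf =>
    and_iff_right_of_imp fun hcount => ?_
  rintro _ ⟨e, he, rfl⟩
  constructor
  · have hfiber : ((G'.edgeSet \ G.edgeSet) ∩ {e' | f e' = f e}).Nonempty := ⟨e, he, rfl⟩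
    exact hfiber.ncard_pos.trans_le (hcount (f e))
  · obtain ⟨w, hw⟩ := hf e he
    rw [hw] at he
    exact mdeg_lt_card_sub_one (G'.ne_of_adj he.1) he.2

section Join

variable {α β : Type*} (K : SimpleGraph α) {G G' : SimpleGraph β}

theorem graphJoin_mono (h : G ≤ G') : graphJoin K G ≤ graphJoin K G' := by
  rintro (a | a) (b | b)
  case inr.inr => simpa [graphJoin] using @h a b
  all_goals simp [graphJoin]

theorem graphJoin_top_top : graphJoin (⊤ : SimpleGraph α) (⊤ : SimpleGraph β) = ⊤ := by
  ext (a | a) (b | b) <;> simp [graphJoin]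

theorem edgeSet_graphJoin_sdiff (G G' : SimpleGraph β) :
    (graphJoin K G').edgeSet \ (graphJoin K G).edgeSet =
      Sym2.map Sum.inr '' (G'.edgeSet \ G.edgeSet) := by
  ext e
  induction e with | _ a b
  rcases a with a | a <;> rcases b with b | b
  case inr.inr =>
    rw [← Sym2.map_mk, (Sym2.map.injective Sum.inr_injective).mem_set_image]
    simp [graphJoin]
  all_goals simp [graphJoin, Sym2.exists]

theorem mdeg_graphJoin_inr [Finite α] [Finite β] (G : SimpleGraph β) (v : β) :
    mdeg (graphJoin K G) (Sum.inr v) = Nat.card α + mdeg G v := by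
  have hnbr : (graphJoin K G).neighborSet (Sum.inr v) =
      Set.range Sum.inl ∪ Sum.inr '' G.neighborSet v := by
    ext (x | x) <;> simp [graphJoin]
  have hdisj : Disjoint (Set.range Sum.inl) (Sum.inr '' G.neighborSet v : Set (α ⊕ β)) :=
    Set.disjoint_left.2 (by simp)
  rw [mdeg, hnbr, Set.ncard_union_eq hdisj, Set.ncard_image_of_injective _ Sum.inr_injective,
    ← Set.image_univ, Set.ncard_image_of_injective _ Sum.inl_injective, Set.ncard_univ, mdeg]

variable [Fintype α] [Fintype β]

theorem marcelloStep_graphJoin (hle : G ≤ G')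
    (h : OrientableWithin (G'.edgeSet \ G.edgeSet) fun v => Nat.card α + mdeg G v) :
    MarcelloStep (graphJoin K G) (graphJoin K G') := by
  refine marcelloStep_iff_s16.2 ⟨graphJoin_mono K hle, ?_⟩
  rw [edgeSet_graphJoin_sdiff]
  refine OrientableWithin.image_map Sum.inr_injective ?_
  simpa only [Function.comp_def, mdeg_graphJoin_inr] using h

theorem MarcelloStep.join (h : MarcelloStep G G') :
    MarcelloStep (graphJoin K G) (graphJoin K G') := by
  obtain ⟨hle, horient⟩ := marcelloStep_iff_s16.1 h
  exact marcelloStep_graphJoin K hle (horient.mono fun v => Nat.le_add_left _ _)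

theorem marcelloStep_graphJoin_bot (h : OrientableWithin G.edgeSet fun _ => Nat.card α) :
    MarcelloStep (graphJoin K ⊥) (graphJoin K G) := by
  refine marcelloStep_graphJoin K bot_le ?_
  rw [edgeSet_bot, Set.sdiff_empty]
  exact h.mono fun v => Nat.le_add_right _ _

theorem MarcelloChain.join {k : ℕ} (h : MarcelloChain G G' k) :
    MarcelloChain (graphJoin K G) (graphJoin K G') k := by
  obtain ⟨c, rfl, rfl, hstep⟩ := h
  exact ⟨fun i => graphJoin K (c i), rfl, rfl, fun i hi => (hstep i hi).join K⟩

end Join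

theorem MarcelloChain.cons {V : Type*} [Fintype V] {G G' H : SimpleGraph V} {k : ℕ}
    (hstep : MarcelloStep G G') (h : MarcelloChain G' H k) : MarcelloChain G H (k + 1) := by
  obtain ⟨c, rfl, rfl, hc⟩ := h
  refine ⟨fun i => i.casesOn G c, rfl, rfl, fun i hi => ?_⟩
  cases i with
  | zero => exact hstep
  | succ i => exact hc i (Nat.lt_of_succ_lt_succ hi)

theorem marcello_star_le_cycle_general {α β : Type*} [Fintype α] [Fintype β] (K : SimpleGraph α)
    {G H : SimpleGraph β} {k : ℕ} (hG : OrientableWithin G.edgeSet fun _ => Nat.card α)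
    (hchain : MarcelloChain G H k) :
    MarcelloChain (graphJoin K ⊥) (graphJoin K H) (k + 1) :=
  (hchain.join K).cons (marcelloStep_graphJoin_bot K hG)

/-- `ϖ(S_{1,n}) ≤ ϖ(C_n) + 1`: if the cycle `C_n` has a Marcello chain of length `k`
to `K_n`, then the star `S_{1,n} = K_1 + N_n` has one of length at most `k + 1`. -/
theorem marcello_star_le_cycle (n : ℕ) (hn : 3 ≤ n) (k : ℕ)
    (hchain : MarcelloChain (SimpleGraph.cycleGraph n) (⊤ : SimpleGraph (Fin n)) k) :
    ∃ k' ≤ k + 1,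
      MarcelloChain (graphJoin (⊤ : SimpleGraph (Fin 1)) (⊥ : SimpleGraph (Fin n)))
        (⊤ : SimpleGraph (Fin 1 ⊕ Fin n)) k' := by
  have hcycle := OrientableWithin.of_subset_range (cycleGraph_edgeSet_subset_range n)
  rw [← graphJoin_top_top]
  exact ⟨k + 1, le_rfl, marcello_star_le_cycle_general ⊤ (hcycle.mono fun _ => by simp) hchain⟩
end

section
/- Let G be the graph on four vertices v_1, v_2, v_3, v_4 with edge set {v_1 v_2, v_2 v_3} (the disjoint union P_3 ⊔ K_1 of a path on three vertices and an isolated vertex). Although (∑_{v : 0 < deg_G(v) < 3} deg_G(v)) + |E(G)| = 6 = 4·3/2, there is no Marcello step from G to the complete graph K_4; hence the converse of the inequality criterion for ϖ(G) = 1 fails. -/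
open SimpleGraph

attribute [local instance] Classical.propDecidable

/-- The graph on four vertices with edge set `{v₁v₂, v₂v₃}`, i.e. `P₃ ⊔ K₁`. -/
def counterexampleGraph : SimpleGraph (Fin 4) :=
  SimpleGraph.fromEdgeSet {s((0 : Fin 4), (1 : Fin 4)), s((1 : Fin 4), (2 : Fin 4))}

/-!
The initiators of a set `F` of new edges lie among the endpoints of these edges and have positive
degree, so `F` has at most as many edges as the degrees of those endpoints add up to. In `P₃ ⊔ K₁`
the three missing edges `v₁v₃`, `v₁v₄`, `v₃v₄` can only be initiated by the two leaves `v₁`, `v₃`,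
since `v₄` is isolated, and the leaves can initiate just two edges. The count of the criterion comes
out right only because of the middle vertex `v₂`, whose sole missing edge is `v₂v₄`.
The vertex `vᵢ` is `i - 1 : Fin 4`.
-/

theorem MarcelloStep.card_le_sum_mdeg {V : Type*} [Fintype V] {G G' : SimpleGraph V}
    (h : MarcelloStep G G') {F : Finset (Sym2 V)} {A : Finset V}
    (hF : (F : Set (Sym2 V)) ⊆ G'.edgeSet \ G.edgeSet)
    (hA : ∀ e ∈ F, ∀ v ∈ e, 0 < mdeg G v → mdeg G v < Fintype.card V - 1 → v ∈ A) :
    F.card ≤ ∑ v ∈ A, mdeg G v := by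
  obtain ⟨-, initiator, mem_edge, deg_bounds, card_initiated_le⟩ := h
  have initiator_mem : ∀ e ∈ F, initiator e ∈ A := fun e he ↦
    have ⟨hpos, hlt⟩ := deg_bounds _ ⟨e, hF he, rfl⟩
    hA e he _ (mem_edge e (hF he)) hpos hlt
  calc
    F.card = ∑ v ∈ A, (F.filter (initiator · = v)).card :=
      Finset.card_eq_sum_card_fiberwise initiator_mem
    _ ≤ ∑ v ∈ A, mdeg G v := Finset.sum_le_sum fun v _ ↦ by
      refine le_trans ?_ (card_initiated_le v)
      rw [← Set.ncard_coe_finset, Finset.coe_filter]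
      exact Set.ncard_le_ncard fun e he ↦ ⟨hF he.1, he.2⟩

theorem edgeSet_counterexampleGraph :
    counterexampleGraph.edgeSet = {s(0, 1), s(1, 2)} := by
  rw [counterexampleGraph, edgeSet_fromEdgeSet, sdiff_eq_left]
  simp [Set.disjoint_left]

theorem neighborSet_counterexampleGraph (v : Fin 4) :
    counterexampleGraph.neighborSet v = (![{1}, {0, 2}, {1}, ∅] v : Finset (Fin 4)) := by
  ext w
  rw [mem_neighborSet, ← mem_edgeSet, edgeSet_counterexampleGraph]
  fin_cases v <;> fin_cases w <;> simp

theorem mdeg_counterexampleGraph (v : Fin 4) :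
    mdeg counterexampleGraph v = ![1, 2, 1, 0] v := by
  rw [mdeg, neighborSet_counterexampleGraph, Set.ncard_coe_finset]
  fin_cases v <;> rfl

theorem marcelloSum_counterexampleGraph : marcelloSum counterexampleGraph = 4 := by
  simp [marcelloSum, Finset.sum_filter, Fin.sum_univ_four, mdeg_counterexampleGraph]

theorem ncard_edgeSet_counterexampleGraph : counterexampleGraph.edgeSet.ncard = 2 := by
  rw [edgeSet_counterexampleGraph, Set.ncard_pair (by simp)]

theorem not_marcelloStep_counterexampleGraph_top :
    ¬ MarcelloStep counterexampleGraph (⊤ : SimpleGraph (Fin 4)) := by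
  intro h
  let missing : Finset (Sym2 (Fin 4)) := {s(0, 2), s(0, 3), s(2, 3)}
  let leaves : Finset (Fin 4) := {0, 2}
  have missing_subset : (missing : Set (Sym2 (Fin 4))) ⊆
      (⊤ : SimpleGraph (Fin 4)).edgeSet \ counterexampleGraph.edgeSet := by
    simp [missing, Set.insert_subset_iff, edgeSet_counterexampleGraph]
  have mem_leaves : ∀ e ∈ missing, ∀ v ∈ e, 0 < mdeg counterexampleGraph v →
      mdeg counterexampleGraph v < Fintype.card (Fin 4) - 1 → v ∈ leaves := by
    simp [missing, leaves, mdeg_counterexampleGraph]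
  have three_le_two : 3 ≤ 2 :=
    calc
      3 = missing.card := by simp [missing]
      _ ≤ ∑ v ∈ leaves, mdeg counterexampleGraph v :=
        h.card_le_sum_mdeg missing_subset mem_leaves
      _ = 2 := by simp [leaves, mdeg_counterexampleGraph]
  omega

/-- Although `∑_{0 < deg v < 3} deg v + |E(G)| = 6 = 4·3/2`, no Marcello step
completes `counterexampleGraph`: the converse of the inequality criterion fails. -/
theorem converse_fails :
    marcelloSum counterexampleGraph + counterexampleGraph.edgeSet.ncard = 6 ∧
      ¬ MarcelloStep counterexampleGraph (⊤ : SimpleGraph (Fin 4)) := by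
  rw [marcelloSum_counterexampleGraph, ncard_edgeSet_counterexampleGraph]
  exact ⟨rfl, not_marcelloStep_counterexampleGraph_top⟩
end
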